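/- For all integers ℓ ≥ 0 and r ≥ 0, the geometric realization of the poset X_{ℓ,r} is a contractible topological space. (Proposition 2.2 of the paper.) -/

import Mathlib

/-- The geometric realization of a poset `P` (the realization of the nerve of `P`, i.e. of
the order complex of `P`), modelled concretely as the space of finitely supported
"barycentric coordinate" functions: assignments of nonnegative weights summing to `1`
whose support is a chain of `P`.  It is topologized as a subspace of `P → ℝ` with the
product topology. -/
def PosetRealization (P : Type*) [Preorder P] : Set (P → ℝ) :=
  {f | (∀ p, 0 ≤ f p) ∧ (Function.support f).Finite ∧ ∑ᶠ p, f p = 1 ∧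
      IsChain (· ≤ ·) (Function.support f)}

/-- The map of geometric realizations induced by a map of posets `g : P → Q`
(the realization of the induced simplicial map of nerves): a point with barycentric
coordinates `f` is sent to the point whose weight at `q` is the total weight of the
fiber `g ⁻¹ {q}`. -/
noncomputable def inducedChainMap {P Q : Type*} (g : P → Q) (f : P → ℝ) : Q → ℝ :=
  fun q => ∑ᶠ p ∈ {p | g p = q}, f p

/-- The three letters `a`, `b`, `(ab)` used to form the words of the poset `X_{ℓ,r}`. -/
inductive XLetter : Type
  | A : XLetter
  | B : XLetter
  | AB : XLetter
deriving DecidableEq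

/-- Number of occurrences of the letter `a` contributed by a letter. -/
def XLetter.ca : XLetter → ℕ
  | .A => 1
  | .B => 0
  | .AB => 1

/-- Number of occurrences of the letter `b` contributed by a letter. -/
def XLetter.cb : XLetter → ℕ
  | .A => 0
  | .B => 1
  | .AB => 1

/-- One step of the order relation on words: `XStep x y` holds iff `x` is obtained from `y`
by replacing one adjacent pair `ab` or `ba` by the single letter `(ab)`. -/
def XStep (x y : List XLetter) : Prop :=
  ∃ u v : List XLetter, x = u ++ [XLetter.AB] ++ v ∧
    (y = u ++ [XLetter.A, XLetter.B] ++ v ∨ y = u ++ [XLetter.B, XLetter.A] ++ v)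

/-- The underlying set of the poset `X_{ℓ,r}`: words in the letters `a`, `b`, `(ab)` with
exactly `l` occurrences of `a` and `r` occurrences of `b`. -/
def XWord (l r : ℕ) : Type :=
  {w : List XLetter // (w.map XLetter.ca).sum = l ∧ (w.map XLetter.cb).sum = r}

theorem XStep.length_lt {x y : List XLetter} (h : XStep x y) : x.length < y.length := by
  obtain ⟨u, v, rfl, (rfl | rfl)⟩ := h <;> simp [List.length_append]

theorem xword_le_length {x y : List XLetter} (h : Relation.ReflTransGen XStep x y) :
    x.length ≤ y.length := by
  induction h with
  | refl => exact le_rfl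
  | tail _ h ih => exact ih.trans h.length_lt.le

/-- The partial order on `X_{ℓ,r}`, generated by the replacement steps. -/
instance (l r : ℕ) : PartialOrder (XWord l r) where
  le x y := Relation.ReflTransGen XStep x.1 y.1
  le_refl _ := Relation.ReflTransGen.refl
  le_trans _ _ _ h h' := Relation.ReflTransGen.trans h h'
  le_antisymm x y h h' := by
    rcases Relation.ReflTransGen.cases_head h with heq | ⟨z, hxz, hzy⟩
    · exact Subtype.ext heq
    · exact absurd ((xword_le_length h').trans_lt
        (hxz.length_lt.trans_le (xword_le_length hzy))) (lt_irrefl _)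

open scoped unitInterval

namespace PosetRealization

section Push

variable {P Q R : Type*} [Fintype P]

open Classical in
/-- Push a weight function forward along a map of finite types. -/
noncomputable def push (f : P → Q) (x : P → ℝ) : Q → ℝ :=
  fun q => ∑ p, if f p = q then x p else 0

theorem push_nonneg (f : P → Q) {x : P → ℝ} (hx : ∀ p, 0 ≤ x p) (q : Q) : 0 ≤ push f x q :=
  Finset.sum_nonneg fun p _ => by split_ifs <;> simp [hx]

theorem sum_push [Fintype Q] (f : P → Q) (x : P → ℝ) : ∑ q, push f x q = ∑ p, x p := by
  classical
  unfold push
  rw [Finset.sum_comm]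
  simp

theorem exists_of_push_ne_zero {f : P → Q} {x : P → ℝ} {q : Q} (h : push f x q ≠ 0) :
    ∃ p, f p = q ∧ x p ≠ 0 := by
  obtain ⟨p, -, hp⟩ := Finset.exists_ne_zero_of_sum_ne_zero h
  exact ⟨p, by_contra fun hn => hp (if_neg hn), fun hn => hp (by simp [hn])⟩

theorem push_id (x : P → ℝ) : push id x = x := by
  classical
  funext q
  simp [push]

theorem push_zero (f : P → Q) : push f (0 : P → ℝ) = 0 := by
  funext q
  simp [push]

theorem push_comp [Fintype Q] (g : Q → R) (f : P → Q) (x : P → ℝ) :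
    push (g ∘ f) x = push g (push f x) := by
  classical
  funext r
  simp only [push, Function.comp_apply]
  have h : ∀ q, (if g q = r then ∑ p, (if f p = q then x p else 0) else 0) =
      ∑ p, if f p = q then (if g q = r then x p else 0) else 0 := by
    intro q
    split_ifs <;> simp
  simp only [h]
  rw [Finset.sum_comm]
  simp

theorem continuous_push (f : P → Q) : Continuous (push f) := by
  refine continuous_pi fun q => continuous_finsetSum _ fun p _ => ?_
  split_ifs <;> fun_prop

end Push

section TopPart

variable {P : Type*} [Fintype P] [PartialOrder P]

open Classical in
/-- The part of the weight `x p` lying in the topmost portion of total mass `t` of `x`. -/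
noncomputable def topPart (t : ℝ) (x : P → ℝ) (p : P) : ℝ :=
  min (x p) (max 0 (t - ∑ q, if p < q then x q else 0))

theorem topPart_nonneg (t : ℝ) {x : P → ℝ} (hx : ∀ p, 0 ≤ x p) (p : P) : 0 ≤ topPart t x p :=
  le_min (hx p) (le_max_left _ _)

theorem topPart_le (t : ℝ) (x : P → ℝ) (p : P) : topPart t x p ≤ x p :=
  min_le_left _ _

open Classical in
theorem add_sum_above_le {x : P → ℝ} (hx : ∀ p, 0 ≤ x p) {p : P} {S : P → Prop} (hp : S p)
    (hS : ∀ q, p < q → S q) :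
    x p + (∑ q, if p < q then x q else 0) ≤ ∑ q, if S q then x q else 0 := by
  have : x p = ∑ q, if p = q then x q else 0 := by simp
  rw [this, ← Finset.sum_add_distrib]
  refine Finset.sum_le_sum fun q _ => ?_
  by_cases h1 : p = q
  · subst h1
    simp [hp]
  · by_cases h2 : p < q
    · simp [h1, h2, hS q h2]
    · simp only [h1, h2, if_false, add_zero]
      split_ifs <;> simp [hx]

theorem topPart_zero {x : P → ℝ} (hx : ∀ p, 0 ≤ x p) : topPart 0 x = 0 := by
  classical
  funext p
  have : 0 ≤ ∑ q, if p < q then x q else 0 :=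
    Finset.sum_nonneg fun q _ => by split_ifs <;> simp [hx]
  simp only [topPart, zero_sub, Pi.zero_apply]
  rw [max_eq_left (by linarith), min_eq_right (hx p)]

theorem topPart_one {x : P → ℝ} (hx : ∀ p, 0 ≤ x p) (h1 : ∑ p, x p = 1) : topPart 1 x = x := by
  classical
  funext p
  have h := add_sum_above_le hx (p := p) (S := fun _ => True) trivial fun _ _ => trivial
  simp only [if_true, h1] at h
  exact min_eq_left (le_max_of_le_right (by linarith))

theorem le_of_topPart {t : ℝ} {x : P → ℝ} (hx : ∀ p, 0 ≤ x p)
    (hc : IsChain (· ≤ ·) (Function.support x)) {p p' : P}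
    (hp : topPart t x p < x p) (hp' : 0 < topPart t x p') : p ≤ p' := by
  classical
  have hxp : x p ≠ 0 := ((topPart_nonneg t hx p).trans_lt hp).ne'
  have hxp' : x p' ≠ 0 := (hp'.trans_le (topPart_le t x p')).ne'
  rcases hc.total hxp hxp' with h | h
  · exact h
  rcases h.eq_or_lt with h | h
  · exact h.ge
  have key := add_sum_above_le hx (S := (p' < ·)) h fun q hq => h.trans hq
  simp only [topPart, lt_min_iff, lt_max_iff, lt_irrefl, false_or] at hp'
  simp only [topPart, min_lt_iff, max_lt_iff, lt_irrefl, false_or] at hp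
  linarith [hp.2, hp'.2]

theorem continuous_topPart :
    Continuous fun y : ℝ × (P → ℝ) => topPart y.1 y.2 := by
  refine continuous_pi fun p => ?_
  classical
  have : Continuous fun y : ℝ × (P → ℝ) => ∑ q, if p < q then y.2 q else 0 := by
    refine continuous_finsetSum _ fun q _ => ?_
    split_ifs <;> fun_prop
  exact ((continuous_apply p).comp continuous_snd).min
    (continuous_const.max (continuous_fst.sub this))

end TopPart

section Realization

variable {P Q R : Type*} [PartialOrder P] [PartialOrder Q] [PartialOrder R]
  [Fintype P] [Fintype Q] [Fintype R]

theorem mem_iff_of_fintype {x : P → ℝ} :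
    x ∈ PosetRealization P ↔ (∀ p, 0 ≤ x p) ∧ ∑ p, x p = 1 ∧
      IsChain (· ≤ ·) (Function.support x) := by
  simp [PosetRealization, finsum_eq_sum_of_fintype, Set.toFinite]

theorem push_mem (f : P →o Q) {x : P → ℝ} (hx : x ∈ PosetRealization P) :
    push f x ∈ PosetRealization Q := by
  obtain ⟨h0, h1, hc⟩ := mem_iff_of_fintype.1 hx
  refine mem_iff_of_fintype.2 ⟨push_nonneg f h0, by rw [sum_push, h1], ?_⟩
  intro q hq q' hq' _
  obtain ⟨p, rfl, hp⟩ := exists_of_push_ne_zero hq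
  obtain ⟨p', rfl, hp'⟩ := exists_of_push_ne_zero hq'
  exact (hc.total hp hp').imp (fun h => f.monotone h) (fun h => f.monotone h)

/-- The map of realizations induced by a monotone map. -/
noncomputable def map (f : P →o Q) : C(PosetRealization P, PosetRealization Q) where
  toFun x := ⟨push f x.1, push_mem f x.2⟩
  continuous_toFun := ((continuous_push f).comp continuous_subtype_val).subtype_mk _

theorem map_id : map (OrderHom.id : P →o P) = ContinuousMap.id _ := by
  ext1 x
  exact Subtype.ext (push_id x.1)

theorem map_comp (g : Q →o R) (f : P →o Q) : map (g.comp f) = (map g).comp (map f) := by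
  ext1 x
  exact Subtype.ext (push_comp g f x.1)

/-- Pointwise comparable monotone maps induce homotopic maps of realizations. The homotopy
moves the weights from `f` to `g` starting from the top of each chain. -/
theorem map_homotopic_of_le {f g : P →o Q} (h : f ≤ g) : (map f).Homotopic (map g) := by
  refine ⟨⟨⟨fun y => ⟨push f (y.2.1 - topPart y.1 y.2.1) + push g (topPart y.1 y.2.1), ?_⟩, ?_⟩,
    ?_, ?_⟩⟩
  · obtain ⟨t, x, hx⟩ := y
    obtain ⟨h0, h1, hc⟩ := mem_iff_of_fintype.1 hx
    have hd : ∀ p, 0 ≤ (x - topPart (t : ℝ) x) p := fun p => sub_nonneg.2 (topPart_le _ _ _)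
    have hm := topPart_nonneg (t : ℝ) h0
    have hsupp : ∀ q, (push f (x - topPart (t : ℝ) x) + push g (topPart (t : ℝ) x)) q ≠ 0 →
        (∃ p, f p = q ∧ topPart (t : ℝ) x p < x p) ∨ ∃ p, g p = q ∧ 0 < topPart (t : ℝ) x p := by
      intro q hq
      by_cases hz : push f (x - topPart (t : ℝ) x) q = 0
      · obtain ⟨p, hp, hne⟩ := exists_of_push_ne_zero (f := g) (x := topPart (t : ℝ) x) (q := q)
          (by simpa [hz] using hq)
        exact .inr ⟨p, hp, (hm p).lt_of_ne' hne⟩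
      · obtain ⟨p, hp, hne⟩ := exists_of_push_ne_zero hz
        exact .inl ⟨p, hp, sub_pos.1 ((hd p).lt_of_ne' hne)⟩
    have hleft : ∀ p, topPart (t : ℝ) x p < x p → x p ≠ 0 := fun p hp => ((hm p).trans_lt hp).ne'
    have hright : ∀ p, 0 < topPart (t : ℝ) x p → x p ≠ 0 :=
      fun p hp => (hp.trans_le (topPart_le _ _ _)).ne'
    refine mem_iff_of_fintype.2 ⟨fun q => add_nonneg (push_nonneg f hd q) (push_nonneg g hm q),
      ?_, ?_⟩
    · simp only [Pi.add_apply, Finset.sum_add_distrib, sum_push, Pi.sub_apply,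
        Finset.sum_sub_distrib, h1, sub_add_cancel]
    · intro q hq q' hq' _
      rcases hsupp q hq with ⟨p, rfl, hp⟩ | ⟨p, rfl, hp⟩ <;>
        rcases hsupp q' hq' with ⟨p', rfl, hp'⟩ | ⟨p', rfl, hp'⟩
      · exact (hc.total (hleft p hp) (hleft p' hp')).imp
          (fun h => f.monotone h) (fun h => f.monotone h)
      · exact .inl ((h p).trans (g.monotone (le_of_topPart h0 hc hp hp')))
      · exact .inr ((h p').trans (g.monotone (le_of_topPart h0 hc hp' hp)))
      · exact (hc.total (hright p hp) (hright p' hp')).imp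
          (fun h => g.monotone h) (fun h => g.monotone h)
  · refine Continuous.subtype_mk ?_ _
    have hx : Continuous fun y : I × PosetRealization P => y.2.1 :=
      continuous_subtype_val.comp continuous_snd
    have ht : Continuous fun y : I × PosetRealization P => topPart (y.1 : ℝ) y.2.1 :=
      continuous_topPart.comp ((continuous_subtype_val.comp continuous_fst).prodMk hx)
    exact ((continuous_push f).comp (hx.sub ht)).add ((continuous_push g).comp ht)
  · intro x
    refine Subtype.ext ?_
    change push f (x.1 - topPart ((0 : I) : ℝ) x.1) + push g (topPart ((0 : I) : ℝ) x.1) =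
      push f x.1
    rw [Set.Icc.coe_zero, topPart_zero (mem_iff_of_fintype.1 x.2).1, push_zero, sub_zero, add_zero]
  · intro x
    refine Subtype.ext ?_
    change push f (x.1 - topPart ((1 : I) : ℝ) x.1) + push g (topPart ((1 : I) : ℝ) x.1) =
      push g x.1
    obtain ⟨h0, h1, -⟩ := mem_iff_of_fintype.1 x.2
    rw [Set.Icc.coe_one, topPart_one h0 h1, sub_self, push_zero, zero_add]

/-- If the identity of `P` is, up to homotopy, induced by a monotone map factoring through a poset
with contractible realization, then the realization of `P` is contractible. -/
theorem contractibleSpace_of_homotopic_comp [ContractibleSpace (PosetRealization Q)]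
    (i : Q →o P) (p : P →o Q)
    (h : (map (OrderHom.id : P →o P)).Homotopic (map (i.comp p))) :
    ContractibleSpace (PosetRealization P) := by
  rw [contractible_iff_id_nullhomotopic, ← map_id]
  obtain ⟨y, hy⟩ := ((id_nullhomotopic (PosetRealization Q)).comp_left (map p)).comp_right (map i)
  exact ⟨y, h.trans (by rw [map_comp]; exact hy)⟩

theorem contractibleSpace_of_unique [Unique P] : ContractibleSpace (PosetRealization P) := by
  have : Unique (PosetRealization P) :=
    { default := ⟨fun _ => 1, mem_iff_of_fintype.2 ⟨by simp, by simp,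
        fun p _ q _ h => absurd (Subsingleton.elim p q) h⟩⟩
      uniq := fun x => Subtype.ext (funext fun p => by
        have := (mem_iff_of_fintype.1 x.2).2.1
        rw [Subsingleton.elim p default]
        simpa using this) }
  infer_instance

end Realization

end PosetRealization

open XLetter Relation

theorem XStep.AB_le_A_B (v : List XLetter) : XStep (AB :: v) (A :: B :: v) :=
  ⟨[], v, rfl, .inl rfl⟩

theorem XStep.AB_le_B_A (v : List XLetter) : XStep (AB :: v) (B :: A :: v) :=
  ⟨[], v, rfl, .inr rfl⟩

theorem XStep.cons {x y : List XLetter} (c : XLetter) (h : XStep x y) :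
    XStep (c :: x) (c :: y) := by
  obtain ⟨u, v, rfl, rfl | rfl⟩ := h
  · exact ⟨c :: u, v, rfl, .inl rfl⟩
  · exact ⟨c :: u, v, rfl, .inr rfl⟩

theorem XStep.cons_reflTransGen {x y : List XLetter} (c : XLetter) (h : ReflTransGen XStep x y) :
    ReflTransGen XStep (c :: x) (c :: y) :=
  h.lift (c :: ·) fun _ _ => XStep.cons c

/-- Case analysis on a step: it happens at the head of the word or in its tail. -/
theorem XStep.cases {x y : List XLetter} (h : XStep x y) :
    (∃ v, x = AB :: v ∧ (y = A :: B :: v ∨ y = B :: A :: v)) ∨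
      ∃ c x' y', x = c :: x' ∧ y = c :: y' ∧ XStep x' y' := by
  obtain ⟨u, v, rfl, h⟩ := h
  rcases u with _ | ⟨c, u⟩
  · exact .inl ⟨v, rfl, h⟩
  · rcases h with rfl | rfl
    · exact .inr ⟨c, _, _, rfl, rfl, u, v, rfl, .inl rfl⟩
    · exact .inr ⟨c, _, _, rfl, rfl, u, v, rfl, .inr rfl⟩

/-- A function on words that is monotone on steps is monotone. -/
theorem XStep.reflTransGen_of_step {f : List XLetter → List XLetter}
    (hf : ∀ x y, XStep x y → ReflTransGen XStep (f x) (f y)) {x y : List XLetter}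
    (h : ReflTransGen XStep x y) : ReflTransGen XStep (f x) (f y) :=
  h.lift' f fun x y => hf x y

namespace XLetter

/-- Remove the first occurrence of `b` in a word. -/
def eraseB : List XLetter → List XLetter
  | [] => []
  | A :: w => A :: eraseB w
  | B :: w => w
  | AB :: w => A :: w

/-- Move the first `b` of a word to the left until at most `k` letters `a` precede it. -/
def pushB : ℕ → List XLetter → List XLetter
  | 0, w => B :: eraseB w
  | k + 1, A :: w => A :: pushB k w
  | _ + 1, w => w

/-- If more than `k` letters `a` precede the first `b`, merge that `b` with the `k`-th letter `a`,
where the letters are numbered from `0`. -/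
def mergeB : ℕ → List XLetter → List XLetter
  | 0, A :: w => AB :: eraseB w
  | k + 1, A :: w => A :: mergeB k w
  | _, w => w

theorem eraseB_mono_step {x y : List XLetter} (h : XStep x y) :
    ReflTransGen XStep (eraseB x) (eraseB y) := by
  induction x generalizing y with
  | nil => rcases h.cases with ⟨v, h, -⟩ | ⟨c, x', y', h, -⟩ <;> cases h
  | cons c x ih =>
    rcases h.cases with ⟨v, hx, rfl | rfl⟩ | ⟨c', x', y', hx, rfl, h'⟩ <;> cases hx
    · exact .refl
    · exact .refl
    · cases c
      · exact XStep.cons_reflTransGen _ (ih h')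
      · exact .single h'
      · exact .single (h'.cons A)

theorem pushB_mono_step (k : ℕ) {x y : List XLetter} (h : XStep x y) :
    ReflTransGen XStep (pushB k x) (pushB k y) := by
  induction k generalizing x y with
  | zero => exact XStep.cons_reflTransGen _ (eraseB_mono_step h)
  | succ k ih =>
    rcases h.cases with ⟨v, rfl, rfl | rfl⟩ | ⟨c, x', y', rfl, rfl, h'⟩
    · cases k <;> exact .single h
    · exact .single h
    · cases c
      · exact XStep.cons_reflTransGen _ (ih h')
      · exact .single h
      · exact .single h

theorem mergeB_mono_step (k : ℕ) {x y : List XLetter} (h : XStep x y) :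
    ReflTransGen XStep (mergeB k x) (mergeB k y) := by
  induction k generalizing x y with
  | zero =>
    rcases h.cases with ⟨v, rfl, rfl | rfl⟩ | ⟨c, x', y', rfl, rfl, h'⟩
    · exact .refl
    · exact .single h
    · cases c
      · exact XStep.cons_reflTransGen _ (eraseB_mono_step h')
      · exact .single h
      · exact .single h
  | succ k ih =>
    rcases h.cases with ⟨v, rfl, rfl | rfl⟩ | ⟨c, x', y', rfl, rfl, h'⟩
    · cases k <;> exact .single h
    · exact .single h
    · cases c
      · exact XStep.cons_reflTransGen _ (ih h')
      · exact .single h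
      · exact .single h

theorem mergeB_le_pushB_succ (k : ℕ) (w : List XLetter) :
    ReflTransGen XStep (mergeB k w) (pushB (k + 1) w) := by
  induction k generalizing w with
  | zero =>
    rcases w with _ | ⟨_ | _ | _, w⟩
    · exact .refl
    · exact .single (XStep.AB_le_A_B _)
    · exact .refl
    · exact .refl
  | succ k ih =>
    rcases w with _ | ⟨_ | _ | _, w⟩
    · exact .refl
    · exact XStep.cons_reflTransGen _ (ih w)
    · exact .refl
    · exact .refl

theorem mergeB_le_pushB (k : ℕ) {w : List XLetter} (hw : 0 < (w.map cb).sum) :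
    ReflTransGen XStep (mergeB k w) (pushB k w) := by
  induction k generalizing w with
  | zero =>
    rcases w with _ | ⟨_ | _ | _, w⟩
    · simp at hw
    · exact .single (XStep.AB_le_B_A _)
    · exact .refl
    · exact .single (XStep.AB_le_B_A _)
  | succ k ih =>
    rcases w with _ | ⟨_ | _ | _, w⟩
    · exact .refl
    · exact XStep.cons_reflTransGen _ (ih (by simpa [cb] using hw))
    · exact .refl
    · exact .refl

theorem sum_ca_eraseB (w : List XLetter) : ((eraseB w).map ca).sum = (w.map ca).sum := by
  induction w with
  | nil => rfl
  | cons c w ih => cases c <;> simp [eraseB, ca, ih]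

theorem sum_cb_eraseB {w : List XLetter} (hw : 0 < (w.map cb).sum) :
    ((eraseB w).map cb).sum + 1 = (w.map cb).sum := by
  induction w with
  | nil => simp at hw
  | cons c w ih =>
    cases c
    · simpa [eraseB, cb] using ih (by simpa [cb] using hw)
    · simp [eraseB, cb, add_comm]
    · simp [eraseB, cb, add_comm]

theorem sum_ca_pushB (k : ℕ) (w : List XLetter) :
    ((pushB k w).map ca).sum = (w.map ca).sum := by
  induction k generalizing w with
  | zero => simp [pushB, ca, sum_ca_eraseB]
  | succ k ih => rcases w with _ | ⟨_ | _ | _, w⟩ <;> simp [pushB, ih]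

theorem sum_cb_pushB (k : ℕ) {w : List XLetter} (hw : 0 < (w.map cb).sum) :
    ((pushB k w).map cb).sum = (w.map cb).sum := by
  induction k generalizing w with
  | zero => simp [pushB, cb, ← sum_cb_eraseB hw, add_comm]
  | succ k ih =>
    rcases w with _ | ⟨_ | _ | _, w⟩
    · rfl
    · simpa [pushB, cb] using ih (by simpa [cb] using hw)
    · rfl
    · rfl

theorem sum_ca_mergeB (k : ℕ) (w : List XLetter) :
    ((mergeB k w).map ca).sum = (w.map ca).sum := by
  induction k generalizing w with
  | zero => rcases w with _ | ⟨_ | _ | _, w⟩ <;> simp [mergeB, ca, sum_ca_eraseB]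
  | succ k ih => rcases w with _ | ⟨_ | _ | _, w⟩ <;> simp [mergeB, ih]

theorem sum_cb_mergeB (k : ℕ) {w : List XLetter} (hw : 0 < (w.map cb).sum) :
    ((mergeB k w).map cb).sum = (w.map cb).sum := by
  induction k generalizing w with
  | zero =>
    rcases w with _ | ⟨_ | _ | _, w⟩
    · rfl
    · have : 0 < (w.map cb).sum := by simpa [cb] using hw
      simp [mergeB, cb, ← sum_cb_eraseB this, add_comm]
    · rfl
    · rfl
  | succ k ih =>
    rcases w with _ | ⟨_ | _ | _, w⟩
    · rfl
    · simpa [mergeB, cb] using ih (by simpa [cb] using hw)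
    · rfl
    · rfl

theorem pushB_eq_self {k : ℕ} {w : List XLetter} (hk : (w.map ca).sum ≤ k)
    (hw : 0 < (w.map cb).sum) : pushB k w = w := by
  induction k generalizing w with
  | zero => rcases w with _ | ⟨_ | _ | _, w⟩ <;> simp_all [pushB, eraseB, ca]
  | succ k ih =>
    rcases w with _ | ⟨_ | _ | _, w⟩
    · rfl
    · simp only [List.map_cons, List.sum_cons, ca, cb, zero_add] at hk hw
      rw [pushB, ih (by omega) hw]
    · rfl
    · rfl

instance : Fintype XLetter := ⟨{A, B, AB}, fun c => by cases c <;> simp⟩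

end XLetter

namespace XWord

variable {l r : ℕ}

theorem length_le (w : List XLetter) : w.length ≤ (w.map ca).sum + (w.map cb).sum := by
  induction w with
  | nil => simp
  | cons c w ih => cases c <;> simp [ca, cb] <;> omega

instance : Finite (XWord l r) :=
  ((List.finite_length_le XLetter (l + r)).subset fun w hw => by
    have := length_le w
    rw [hw.1, hw.2] at this
    exact this : {w : List XLetter | (w.map ca).sum = l ∧ (w.map cb).sum = r}.Finite).to_subtype

noncomputable instance : Fintype (XWord l r) := Fintype.ofFinite _

theorem sum_cb_pos (w : XWord l (r + 1)) : 0 < (w.1.map cb).sum := by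
  rw [w.2.2]
  exact r.succ_pos

/-- `XLetter.pushB` as a monotone endomorphism of the poset of words. -/
def pushHom (k : ℕ) : XWord l (r + 1) →o XWord l (r + 1) where
  toFun w := ⟨pushB k w.1, (sum_ca_pushB k _).trans w.2.1, (sum_cb_pushB k w.sum_cb_pos).trans w.2.2⟩
  monotone' _ _ h := XStep.reflTransGen_of_step (fun _ _ => pushB_mono_step k) h

/-- `XLetter.mergeB` as a monotone endomorphism of the poset of words. -/
def mergeHom (k : ℕ) : XWord l (r + 1) →o XWord l (r + 1) where
  toFun w :=
    ⟨mergeB k w.1, (sum_ca_mergeB k _).trans w.2.1, (sum_cb_mergeB k w.sum_cb_pos).trans w.2.2⟩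
  monotone' _ _ h := XStep.reflTransGen_of_step (fun _ _ => mergeB_mono_step k) h

/-- `XLetter.eraseB` as a monotone map. -/
def eraseHom : XWord l (r + 1) →o XWord l r where
  toFun w := ⟨eraseB w.1, (sum_ca_eraseB _).trans w.2.1,
    Nat.succ_injective ((sum_cb_eraseB w.sum_cb_pos).trans w.2.2)⟩
  monotone' _ _ h := XStep.reflTransGen_of_step (fun _ _ => eraseB_mono_step) h

/-- Prepending the letter `b` as a monotone map. -/
def consHom : XWord l r →o XWord l (r + 1) where
  toFun w := ⟨B :: w.1, by simp [ca, w.2.1], by simp [cb, w.2.2, add_comm]⟩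
  monotone' _ _ h := XStep.cons_reflTransGen B h

theorem pushHom_eq_id : (pushHom l : XWord l (r + 1) →o _) = OrderHom.id := by
  ext1
  funext w
  exact Subtype.ext (pushB_eq_self w.2.1.le w.sum_cb_pos)

theorem map_pushHom_homotopic (k : ℕ) :
    (PosetRealization.map (pushHom k : XWord l (r + 1) →o _)).Homotopic
      (PosetRealization.map (pushHom 0)) := by
  induction k with
  | zero => exact .refl _
  | succ k ih =>
    have h1 : (mergeHom k : XWord l (r + 1) →o _) ≤ pushHom (k + 1) :=
      fun w => mergeB_le_pushB_succ k w.1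
    have h2 : (mergeHom k : XWord l (r + 1) →o _) ≤ pushHom k :=
      fun w => mergeB_le_pushB k w.sum_cb_pos
    exact ((PosetRealization.map_homotopic_of_le h1).symm.trans
      (PosetRealization.map_homotopic_of_le h2)).trans ih

theorem eq_replicate {w : List XLetter} (hw : (w.map cb).sum = 0) :
    w = List.replicate (w.map ca).sum A := by
  induction w with
  | nil => rfl
  | cons c w ih =>
    cases c
    · have h := ih (by simpa [cb] using hw)
      simp only [List.map_cons, List.sum_cons, ca, add_comm 1, List.replicate_succ]
      rw [← h]
    · simp [cb] at hw
    · simp [cb] at hw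

/-- The only word without `b` is a power of `a`. -/
instance : Unique (XWord l 0) where
  default := ⟨List.replicate l A, by simp [ca], by simp [cb]⟩
  uniq w := Subtype.ext (by
    have h := eq_replicate w.2.2
    rw [w.2.1] at h
    exact h)

end XWord

/-- **Proposition 2.2.** For all `ℓ, r ≥ 0`, the geometric realization of the poset
`X_{ℓ,r}` is contractible. -/
theorem contractible_realization_XWord (l r : ℕ) :
    ContractibleSpace ↥(PosetRealization (XWord l r)) := by
  induction r with
  | zero =>
    exact PosetRealization.contractibleSpace_of_unique
  | succ r ih =>
    refine PosetRealization.contractibleSpace_of_homotopic_comp XWord.consHom XWord.eraseHom ?_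
    rw [← XWord.pushHom_eq_id]
    exact XWord.map_pushHom_homotopic l
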